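/- For each positive integer n let ρ^(n) be a probability distribution on the set W(n) of weak compositions of n, and let ν^(n) be the probability distribution on the set P(n) of integer partitions of n defined by ν^(n)(λ) = Σ_{α ∈ W(n), ord α = λ} ρ^(n)(α). Let φ : [0,∞) → [0,∞) be a right-continuous, weakly decreasing function with φ(x) → 0 as x → ∞, and let (a_n) be a sequence of positive scaling factors. If for every ε > 0 one has ρ^(n){α ∈ W(n) : sup_{x≥0} |∂^{a_n} α(x) − φ(x)| < ε} → 1 as n → ∞, then for every ε > 0 one also has ν^(n){λ ∈ P(n) : sup_{x≥0} |∂^{a_n} λ(x) − φ(x)| < ε} → 1 as n → ∞. -/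

import Mathlib

open Filter

/-- `l : ℕ → ℕ` is a weak composition of `n`: finitely many nonzero parts, summing to `n`. -/
def IsWeakCompOf (n : ℕ) (l : ℕ → ℕ) : Prop :=
  (Function.support l).Finite ∧ ∑ᶠ i, l i = n

/-- The `a`-rescaled diagram-boundary function of a sequence of pile sizes
`l : ℕ → ℕ` (0-indexed): `∂ᵃl(x) = (a/n) · l_{⌊ax⌋+1}`. -/
noncomputable def rescaledBoundary (n : ℕ) (a : ℝ) (l : ℕ → ℕ) (x : ℝ) : ℝ :=
  (a / n) * l ⌊a * x⌋₊

/-- The decreasing rearrangement (`ord`) of a finitely supported sequence: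
`ordC l k` is the `(k+1)`-st largest value among the parts of `l`. -/
noncomputable def ordC (l : ℕ → ℕ) (k : ℕ) : ℕ :=
  sSup {m : ℕ | ∃ s : Finset ℕ, s.card = k + 1 ∧ ∀ i ∈ s, m ≤ l i}

/-- `l : ℕ → ℕ` is an integer partition of `n` (weakly decreasing weak composition). -/
def IsPartitionOf (n : ℕ) (l : ℕ → ℕ) : Prop :=
  IsWeakCompOf n l ∧ Antitone l

/-!
The point is that sorting is nonexpansive towards decreasing profiles. The `(k+1)`-st largest part
of `α` is at least some part of index at most `k` and at most some part of index at least `k`, so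
the value at `x` of the boundary of `ord α` lies above a value of the boundary of `α` at some
`y ≤ x` and below one at some `y ≥ x`. As `φ` is weakly decreasing, a uniform bound
`|∂α - φ| ≤ E` therefore passes to `|∂(ord α) - φ| ≤ E`. Hence `ν⁽ⁿ⁾` gives the `ε`-ball around
`φ` at least the mass that `ρ⁽ⁿ⁾` gives it, which is squeezed to `1`.

That `ord α` still has sum `n` comes from counting by rows instead of columns: the sum of the parts
is `∑ₘ #{i | m < αᵢ}`, and sorting preserves each of these counts.
-/

section SubtypeSums

variable {Ω L γ : Type*} [AddCommGroup γ] [UniformSpace γ] [IsUniformAddGroup γ] [CompleteSpace γ]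

theorem tsum_subtype_fiberwise [T0Space γ] {f : Ω → γ} (hf : Summable f) (T : Ω → L)
    (p : Ω → Prop) (q : L → Prop) :
    ∑' l : {l // q l}, ∑' ω : {ω // p ω ∧ T ω = l.1}, f ω.1 =
      ∑' ω : {ω // p ω ∧ q (T ω)}, f ω.1 := by
  let e : (Σ l : {l // q l}, {ω // p ω ∧ T ω = l.1}) ≃ {ω // p ω ∧ q (T ω)} :=
    { toFun := fun x => ⟨x.2.1, x.2.2.1, x.2.2.2.symm ▸ x.1.2⟩
      invFun := fun ω => ⟨⟨T ω.1, ω.2.2⟩, ω.1, ω.2.1, rfl⟩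
      left_inv := by rintro ⟨⟨_, _⟩, _, _, hT⟩; cases hT; rfl
      right_inv := fun _ => rfl }
  have hsigma : Summable fun x => f (e x).1 :=
    hf.comp_injective (Subtype.val_injective.comp e.injective)
  exact hsigma.tsum_sigma.symm.trans (e.tsum_eq fun ω => f ω.1)

theorem tsum_subtype_le_tsum_subtype [PartialOrder γ] [IsOrderedAddMonoid γ]
    [OrderClosedTopology γ] {f : Ω → γ} (hf : Summable f) (hf_nonneg : ∀ ω, 0 ≤ f ω)
    {p q : Ω → Prop} (hpq : ∀ ω, p ω → q ω) :
    ∑' ω : {ω // p ω}, f ω.1 ≤ ∑' ω : {ω // q ω}, f ω.1 :=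
  Summable.tsum_le_tsum_of_inj (Subtype.map id hpq)
    (Subtype.map_injective hpq Function.injective_id) (fun _ _ => hf_nonneg _) (fun _ => le_rfl)
    (hf.comp_injective Subtype.val_injective) (hf.comp_injective Subtype.val_injective)

end SubtypeSums

section LayerCake

variable {ι : Type*} {f : ι → ℕ}

theorem bddAbove_range_of_finite_support (hf : f.support.Finite) : BddAbove (Set.range f) :=
  (((hf.image f).insert 0).subset (Function.range_subset_insert_image_support f)).bddAbove

theorem finite_setOf_lt_of_finite_support (hf : f.support.Finite) (m : ℕ) :
    {i | m < f i}.Finite :=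
  hf.subset fun _ hi => Nat.ne_zero_of_lt hi

theorem finsum_eq_finsum_ncard_setOf_lt (hf : f.support.Finite) :
    ∑ᶠ i, f i = ∑ᶠ m, {i | m < f i}.ncard := by
  obtain ⟨M, hM⟩ := bddAbove_range_of_finite_support hf
  replace hM (i : ι) : f i ≤ M := hM ⟨i, rfl⟩
  have hlevel (m : ℕ) : {i | m < f i}.ncard = (hf.toFinset.filter (m < f ·)).card := by
    rw [← Set.ncard_coe_finset]
    congr 1
    ext i
    simpa using Nat.ne_zero_of_lt
  have hlevels : (Function.support fun m => {i | m < f i}.ncard) ⊆ Finset.range M := by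
    intro m hm
    obtain ⟨i, hi⟩ := Set.nonempty_of_ncard_ne_zero hm
    simpa using lt_of_lt_of_le hi (hM i)
  have hcolumn (i : ι) : f i = ((Finset.range M).filter (· < f i)).card := by
    have : (Finset.range M).filter (· < f i) = Finset.range (f i) := by
      ext m
      have := hM i
      simp only [Finset.mem_filter, Finset.mem_range]
      omega
    rw [this, Finset.card_range]
  calc ∑ᶠ i, f i = ∑ i ∈ hf.toFinset, ((Finset.range M).filter (· < f i)).card := by
        simp only [finsum_eq_sum f hf, ← hcolumn]
    _ = ∑ m ∈ Finset.range M, (hf.toFinset.filter (m < f ·)).card :=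
        Finset.sum_card_bipartiteAbove_eq_sum_card_bipartiteBelow fun i m => m < f i
    _ = ∑ᶠ m, {i | m < f i}.ncard := by
        rw [finsum_eq_sum_of_support_subset _ hlevels]
        simp only [hlevel]

end LayerCake

section DecreasingRearrangement

variable {l : ℕ → ℕ}

theorem le_ordC_iff (hl : BddAbove (Set.range l)) {k m : ℕ} :
    m ≤ ordC l k ↔ ∃ s : Finset ℕ, s.card = k + 1 ∧ ∀ i ∈ s, m ≤ l i := by
  let S := {m : ℕ | ∃ s : Finset ℕ, s.card = k + 1 ∧ ∀ i ∈ s, m ≤ l i}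
  have hbdd : BddAbove S := by
    obtain ⟨M, hM⟩ := hl
    refine ⟨M, ?_⟩
    rintro m ⟨s, hs, hm⟩
    obtain ⟨i, hi⟩ : s.Nonempty := Finset.card_pos.1 (hs ▸ k.succ_pos)
    exact (hm i hi).trans (hM ⟨i, rfl⟩)
  have hmem : ordC l k ∈ S := Nat.sSup_mem ⟨0, Finset.range (k + 1), by simp⟩ hbdd
  refine ⟨fun hm => ?_, fun hm => le_csSup hbdd hm⟩
  obtain ⟨s, hs, hle⟩ := hmem
  exact ⟨s, hs, fun i hi => hm.trans (hle i hi)⟩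

theorem antitone_ordC (hl : BddAbove (Set.range l)) : Antitone (ordC l) := by
  intro j k hjk
  obtain ⟨s, hs, hle⟩ := (le_ordC_iff hl).1 (le_refl (ordC l k))
  obtain ⟨t, hts, ht⟩ := Finset.exists_subset_card_eq (show j + 1 ≤ s.card by omega)
  exact (le_ordC_iff hl).2 ⟨t, ht, fun i hi => hle i (hts hi)⟩

theorem exists_le_and_le_ordC (hl : BddAbove (Set.range l)) (k : ℕ) :
    ∃ i ≤ k, l i ≤ ordC l k := by
  obtain ⟨i, hi, hmin⟩ :=
    (Finset.range (k + 1)).exists_min_image l Finset.nonempty_range_add_one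
  exact ⟨i, Finset.mem_range_succ_iff.1 hi, (le_ordC_iff hl).2 ⟨_, Finset.card_range _, hmin⟩⟩

theorem exists_ge_and_ordC_le (hl : BddAbove (Set.range l)) (k : ℕ) :
    ∃ i ≥ k, ordC l k ≤ l i := by
  obtain ⟨s, hs, hle⟩ := (le_ordC_iff hl).1 (le_refl (ordC l k))
  obtain ⟨i, his, hik⟩ : ∃ i ∈ s, i ∉ Finset.range k :=
    Finset.exists_mem_notMem_of_card_lt_card (by simp [hs])
  exact ⟨i, by simpa using hik, hle i his⟩

theorem lt_ordC_iff (hl : l.support.Finite) {k m : ℕ} :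
    m < ordC l k ↔ k < {i | m < l i}.ncard := by
  have hlevel := finite_setOf_lt_of_finite_support hl m
  rw [Set.ncard_eq_toFinset_card _ hlevel, ← Nat.succ_le_iff, ← Nat.succ_le_iff,
    le_ordC_iff (bddAbove_range_of_finite_support hl)]
  constructor
  · rintro ⟨s, hs, hlt⟩
    exact hs.symm.trans_le (Finset.card_le_card fun i hi => by simpa using hlt i hi)
  · intro hk
    obtain ⟨s, hsub, hs⟩ := Finset.exists_subset_card_eq hk
    exact ⟨s, hs, fun i hi => by simpa using hsub hi⟩

theorem setOf_lt_ordC (hl : l.support.Finite) (m : ℕ) :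
    {k | m < ordC l k} = Set.Iio {i | m < l i}.ncard :=
  Set.ext fun _ => lt_ordC_iff hl

theorem finite_support_ordC (hl : l.support.Finite) : (ordC l).support.Finite := by
  have hsupport : (ordC l).support = {k | 0 < ordC l k} :=
    Set.ext fun _ => Nat.pos_iff_ne_zero.symm
  rw [hsupport, setOf_lt_ordC hl]
  exact Set.finite_Iio _

theorem finsum_ordC (hl : l.support.Finite) : ∑ᶠ k, ordC l k = ∑ᶠ i, l i := by
  simp only [finsum_eq_finsum_ncard_setOf_lt (finite_support_ordC hl),
    finsum_eq_finsum_ncard_setOf_lt hl, setOf_lt_ordC hl, Set.ncard_Iio_nat]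

theorem IsWeakCompOf.isPartitionOf_ordC {n : ℕ} (hl : IsWeakCompOf n l) :
    IsPartitionOf n (ordC l) :=
  ⟨⟨finite_support_ordC hl.1, (finsum_ordC hl.1).trans hl.2⟩,
    antitone_ordC (bddAbove_range_of_finite_support hl.1)⟩

end DecreasingRearrangement

section Boundary

variable {n : ℕ} {a : ℝ} {l : ℕ → ℕ} {φ : ℝ → ℝ}

theorem rescaledBoundary_le_rescaledBoundary (n : ℕ) (ha : 0 ≤ a) {l' : ℕ → ℕ} {x y : ℝ}
    (h : l ⌊a * x⌋₊ ≤ l' ⌊a * y⌋₊) : rescaledBoundary n a l x ≤ rescaledBoundary n a l' y :=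
  mul_le_mul_of_nonneg_left (Nat.cast_le.2 h) (by positivity)

theorem exists_le_rescaledBoundary_le_ordC (n : ℕ) (ha : 0 < a) (hl : BddAbove (Set.range l))
    {x : ℝ} (hx : 0 ≤ x) :
    ∃ y, 0 ≤ y ∧ y ≤ x ∧ rescaledBoundary n a l y ≤ rescaledBoundary n a (ordC l) x := by
  obtain ⟨i, hi, hle⟩ := exists_le_and_le_ordC hl ⌊a * x⌋₊
  have hix : (i : ℝ) ≤ a * x := (Nat.le_floor_iff (by positivity)).1 hi
  refine ⟨i / a, by positivity, (div_le_iff₀' ha).2 hix,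
    rescaledBoundary_le_rescaledBoundary n ha.le ?_⟩
  rwa [mul_div_cancel₀ _ ha.ne', Nat.floor_natCast]

theorem exists_ge_rescaledBoundary_ordC_le (n : ℕ) (ha : 0 < a) (hl : BddAbove (Set.range l))
    (x : ℝ) : ∃ y ≥ x, rescaledBoundary n a (ordC l) x ≤ rescaledBoundary n a l y := by
  obtain ⟨i, hi, hle⟩ := exists_ge_and_ordC_le hl ⌊a * x⌋₊
  refine ⟨max x (i / a), le_max_left _ _, rescaledBoundary_le_rescaledBoundary n ha.le ?_⟩
  rwa [mul_max_of_nonneg _ _ ha.le, mul_div_cancel₀ _ ha.ne', Nat.floor_mono.map_max,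
    Nat.floor_natCast, max_eq_right hi]

theorem abs_rescaledBoundary_ordC_sub_le (ha : 0 < a) (hl : BddAbove (Set.range l))
    (hφ : AntitoneOn φ (Set.Ici 0)) {E : ℝ}
    (hE : ∀ y, 0 ≤ y → |rescaledBoundary n a l y - φ y| ≤ E) {x : ℝ} (hx : 0 ≤ x) :
    |rescaledBoundary n a (ordC l) x - φ x| ≤ E := by
  rw [abs_le]
  constructor
  · obtain ⟨y, hy, hyx, hle⟩ := exists_le_rescaledBoundary_le_ordC n ha hl hx
    linarith [(abs_le.1 (hE y hy)).1, hφ hy hx hyx]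
  · obtain ⟨y, hxy, hle⟩ := exists_ge_rescaledBoundary_ordC_le n ha hl x
    have hy : 0 ≤ y := hx.trans hxy
    linarith [(abs_le.1 (hE y hy)).2, hφ hx hy hxy]

theorem bddAbove_range_abs_rescaledBoundary_sub (n : ℕ) (ha : 0 ≤ a)
    (hl : BddAbove (Set.range l)) (hφ_nonneg : ∀ x, 0 ≤ x → 0 ≤ φ x)
    (hφ_anti : AntitoneOn φ (Set.Ici 0)) :
    BddAbove (Set.range fun x : NNReal => |rescaledBoundary n a l x - φ x|) := by
  obtain ⟨M, hM⟩ := hl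
  refine ⟨max (a / n * M) (φ 0), ?_⟩
  rintro _ ⟨x, rfl⟩
  have hboundary_nonneg : 0 ≤ rescaledBoundary n a l x := by
    unfold rescaledBoundary
    positivity
  have hboundary_le : rescaledBoundary n a l x ≤ a / n * M :=
    mul_le_mul_of_nonneg_left (Nat.cast_le.2 (hM ⟨_, rfl⟩)) (by positivity)
  exact abs_sub_le_of_nonneg_of_le hboundary_nonneg (le_max_of_le_left hboundary_le)
    (hφ_nonneg x x.2) (le_max_of_le_right (hφ_anti Set.self_mem_Ici x.2 x.2))

theorem iSup_abs_rescaledBoundary_ordC_sub_le (n : ℕ) (ha : 0 < a)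
    (hl : BddAbove (Set.range l)) (hφ_nonneg : ∀ x, 0 ≤ x → 0 ≤ φ x)
    (hφ_anti : AntitoneOn φ (Set.Ici 0)) :
    (⨆ x : NNReal, |rescaledBoundary n a (ordC l) x - φ x|) ≤
      ⨆ x : NNReal, |rescaledBoundary n a l x - φ x| :=
  have hbdd := bddAbove_range_abs_rescaledBoundary_sub n ha.le hl hφ_nonneg hφ_anti
  ciSup_le fun x => abs_rescaledBoundary_ordC_sub_le ha hl hφ_anti
    (fun y hy => le_ciSup hbdd ⟨y, hy⟩) x.2

end Boundary

theorem limit_shape_transfers_to_partitions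
    (ρ : ℕ → (ℕ → ℕ) → ℝ) (ν : ℕ → (ℕ → ℕ) → ℝ)
    (a : ℕ → ℝ) (ha : ∀ n, 0 < n → 0 < a n)
    (hρ_nonneg : ∀ n, 0 < n → ∀ α, 0 ≤ ρ n α)
    (hρ_supp : ∀ n, 0 < n → ∀ α, ¬ IsWeakCompOf n α → ρ n α = 0)
    (hρ_total : ∀ n, 0 < n → HasSum (ρ n) 1)
    (hν : ∀ n, 0 < n → ∀ l, ν n l =
      ∑' α : {α : ℕ → ℕ // IsWeakCompOf n α ∧ ordC α = l}, ρ n α.1)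
    (φ : ℝ → ℝ)
    (hφ_nonneg : ∀ x : ℝ, 0 ≤ x → 0 ≤ φ x)
    (hφ_anti : AntitoneOn φ (Set.Ici 0))
    (hφ_rc : ∀ x : ℝ, 0 ≤ x → ContinuousWithinAt φ (Set.Ici x) x)
    (hφ_lim : Tendsto φ atTop (nhds 0))
    (hconv : ∀ ε : ℝ, 0 < ε →
      Tendsto (fun n =>
        ∑' α : {α : ℕ → ℕ // IsWeakCompOf n α ∧
            (⨆ x : NNReal, |rescaledBoundary n (a n) α x - φ x|) < ε}, ρ n α.1)
        atTop (nhds 1)) :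
    ∀ ε : ℝ, 0 < ε →
      Tendsto (fun n =>
        ∑' l : {l : ℕ → ℕ // IsPartitionOf n l ∧
            (⨆ x : NNReal, |rescaledBoundary n (a n) l x - φ x|) < ε}, ν n l.1)
        atTop (nhds 1) := by
  intro ε hε
  have hmass (n : ℕ) (hn : 0 < n) :
      ∑' l : {l : ℕ → ℕ // IsPartitionOf n l ∧
          (⨆ x : NNReal, |rescaledBoundary n (a n) l x - φ x|) < ε}, ν n l.1 =
        ∑' α : {α : ℕ → ℕ // IsWeakCompOf n α ∧ IsPartitionOf n (ordC α) ∧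
          (⨆ x : NNReal, |rescaledBoundary n (a n) (ordC α) x - φ x|) < ε}, ρ n α.1 := by
    simp only [hν n hn]
    exact tsum_subtype_fiberwise (hρ_total n hn).summable ordC (IsWeakCompOf n) fun l =>
      IsPartitionOf n l ∧ (⨆ x : NNReal, |rescaledBoundary n (a n) l x - φ x|) < ε
  refine tendsto_of_tendsto_of_tendsto_of_le_of_le' (hconv ε hε) tendsto_const_nhds ?_ ?_
  · filter_upwards [eventually_gt_atTop 0] with n hn
    rw [hmass n hn]
    refine tsum_subtype_le_tsum_subtype (hρ_total n hn).summable (hρ_nonneg n hn) ?_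
    exact fun α ⟨hα, hclose⟩ => ⟨hα, hα.isPartitionOf_ordC,
      (iSup_abs_rescaledBoundary_ordC_sub_le n (ha n hn) (bddAbove_range_of_finite_support hα.1)
        hφ_nonneg hφ_anti).trans_lt hclose⟩
  · filter_upwards [eventually_gt_atTop 0] with n hn
    rw [hmass n hn, ← (hρ_total n hn).tsum_eq]
    exact (hρ_total n hn).summable.tsum_subtype_le _ _ (hρ_nonneg n hn)
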